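/- Let Φ be a nonnegative measurable function on ℝ^n and k ≥ 0 an integer with ∫_{ℝ^n} |y|^n (1 + |y|^{-k}) Φ(y) dy < ∞. Then for every f ∈ W^{k,1}(ℝ^n) and every multi-index α with |α| ≤ k, the weak derivative of H_Φ f satisfies, for a.e. x, D^α(H_Φ f)(x) = ∫_{ℝ^n} |y|^{-|α|} Φ(y) (D^α f)(x/|y|) dy. -/

import Mathlib

/-!
Each dilation `x ↦ f (r • x)` with `r ≠ 0` has the weak derivative `r ^ |α| * D^α f (r • x)`, by the
chain rule for test functions and a linear change of variables. The operator `H_Φ` superposes the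
dilations `r = ‖y‖⁻¹` with weight `Φ`, and integrating these identities over `y` gives the formula.
The dilated function has `L¹` norm `‖y‖ ^ n * ‖f‖₁`, so the weighted integrability of `Φ` is
what Fubini's theorem needs to exchange the `y`-integral with the pairing against a test function;
on the derivative side the relevant weight is `‖y‖⁻¹ ^ |α| * Φ`, controlled by `1 + ‖y‖⁻¹ ^ k`.
-/

open MeasureTheory

noncomputable section

/-- Action of an `n × n` matrix on a vector of `ℝⁿ` (Euclidean space). -/
def matVec {n : ℕ} (M : Matrix (Fin n) (Fin n) ℝ) (x : EuclideanSpace ℝ (Fin n)) :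
    EuclideanSpace ℝ (Fin n) :=
  (WithLp.equiv 2 (Fin n → ℝ)).symm (M.mulVec (WithLp.equiv 2 (Fin n → ℝ) x))

/-- Hilbert–Schmidt (Frobenius) norm of a matrix. -/
def frobNorm {n : ℕ} (M : Matrix (Fin n) (Fin n) ℝ) : ℝ :=
  Real.sqrt (∑ i, ∑ j, (M i j) ^ 2)

/-- Classical partial derivative `∂/∂xᵢ`. -/
def pderiv1 {n : ℕ} (i : Fin n) (f : EuclideanSpace ℝ (Fin n) → ℝ) :
    EuclideanSpace ℝ (Fin n) → ℝ :=
  fun x => fderiv ℝ f x (EuclideanSpace.single i 1)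

/-- Classical multi-index derivative `D^α = ∂^{α₁}_{x₁} ⋯ ∂^{αₙ}_{xₙ}`. -/
def mderiv {n : ℕ} (α : Fin n → ℕ) (f : EuclideanSpace ℝ (Fin n) → ℝ) :
    EuclideanSpace ℝ (Fin n) → ℝ :=
  (List.finRange n).foldr (fun i g => (pderiv1 i)^[α i] g) f

/-- `g` is the weak derivative of order `α` of `f`:
`∫ f · D^α φ = (−1)^{|α|} ∫ g · φ` for all test functions `φ ∈ C_c^∞`. -/
def IsWeakDeriv {n : ℕ} (α : Fin n → ℕ) (f g : EuclideanSpace ℝ (Fin n) → ℝ) : Prop :=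
  ∀ φ : EuclideanSpace ℝ (Fin n) → ℝ, ContDiff ℝ (⊤ : ℕ∞) φ → HasCompactSupport φ →
    ∫ x, f x * mderiv α φ x = (-1 : ℝ) ^ (∑ i, α i) * ∫ x, g x * φ x

/-- `D` is a family of integrable weak derivatives of `f` for all multi-indices `|α| ≤ k`;
this expresses `f ∈ W^{k,1}(ℝⁿ)` together with a choice of its weak derivatives. -/
def HasSobolevDerivs {n : ℕ} (k : ℕ) (f : EuclideanSpace ℝ (Fin n) → ℝ)
    (D : (Fin n → ℕ) → EuclideanSpace ℝ (Fin n) → ℝ) : Prop :=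
  D 0 = f ∧ ∀ α : Fin n → ℕ, (∑ i, α i) ≤ k → Integrable (D α) ∧ IsWeakDeriv α f (D α)

/-- The Sobolev norm `‖f‖_{W^{k,1}} = Σ_{|α| ≤ k} ‖D^α f‖_{L¹}`, computed from a family `D`
of weak derivatives. -/
def sobolevNorm {n : ℕ} (k : ℕ) (D : (Fin n → ℕ) → EuclideanSpace ℝ (Fin n) → ℝ) : ℝ :=
  ∑ α ∈ (Fintype.piFinset fun _ : Fin n => Finset.range (k + 1)).filter
      (fun α => ∑ i, α i ≤ k), ∫ x, |D α x|

/-- The generalized Hausdorff operator `H_{Φ,A} f (x) = ∫ Φ(y) f(A(y)x) dy`. -/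
def hausdorffOp {n : ℕ} (Φ : EuclideanSpace ℝ (Fin n) → ℝ)
    (A : EuclideanSpace ℝ (Fin n) → Matrix (Fin n) (Fin n) ℝ)
    (f : EuclideanSpace ℝ (Fin n) → ℝ) : EuclideanSpace ℝ (Fin n) → ℝ :=
  fun x => ∫ y, Φ y * f (matVec (A y) x)

/-- The Hausdorff operator `H_Φ f(x) = ∫ Φ(y) f(x/|y|) dy`. -/
def hausdorffRad {n : ℕ} (Φ : EuclideanSpace ℝ (Fin n) → ℝ)
    (f : EuclideanSpace ℝ (Fin n) → ℝ) : EuclideanSpace ℝ (Fin n) → ℝ :=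
  fun x => ∫ y, Φ y * f (‖y‖⁻¹ • x)

section MultiIndexDerivative

variable {n : ℕ}

lemma pderiv1_const_mul_comp_smul (i : Fin n) (φ : EuclideanSpace ℝ (Fin n) → ℝ) (c r : ℝ) :
    pderiv1 i (fun x => c * φ (r • x)) = fun x => c * r * pderiv1 i φ (r • x) := by
  funext x
  have hsmul : (fun x => c * φ (r • x)) = c • fun x => φ (r • x) := rfl
  simp only [pderiv1, hsmul, fderiv_const_smul_field, Pi.smul_apply, fderiv_comp_smul,
    smul_apply, smul_eq_mul, mul_assoc]

lemma iterate_pderiv1_const_mul_comp_smul (i : Fin n) (m : ℕ)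
    (φ : EuclideanSpace ℝ (Fin n) → ℝ) (c r : ℝ) :
    (pderiv1 i)^[m] (fun x => c * φ (r • x)) =
      fun x => c * r ^ m * (pderiv1 i)^[m] φ (r • x) := by
  induction m with
  | zero => simp
  | succ m ih =>
    rw [Function.iterate_succ_apply', ih, pderiv1_const_mul_comp_smul]
    simp only [Function.iterate_succ_apply', pow_succ, mul_assoc]

lemma foldr_iterate_pderiv1_comp_smul (α : Fin n → ℕ) (l : List (Fin n))
    (φ : EuclideanSpace ℝ (Fin n) → ℝ) (r : ℝ) :
    l.foldr (fun i g => (pderiv1 i)^[α i] g) (fun x => φ (r • x)) =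
      fun x => r ^ (l.map α).sum * l.foldr (fun i g => (pderiv1 i)^[α i] g) φ (r • x) := by
  induction l with
  | nil => simp
  | cons i l ih =>
    simp only [List.foldr_cons, ih, iterate_pderiv1_const_mul_comp_smul, List.map_cons,
      List.sum_cons, pow_add, mul_comm (r ^ α i)]

lemma mderiv_comp_smul (α : Fin n → ℕ) (φ : EuclideanSpace ℝ (Fin n) → ℝ) (r : ℝ) :
    mderiv α (fun x => φ (r • x)) = fun x => r ^ (∑ i, α i) * mderiv α φ (r • x) := by
  simp only [mderiv, foldr_iterate_pderiv1_comp_smul, Fin.sum_univ_def]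

/-- Test functions, i.e. elements of `C_c^∞(ℝⁿ)`: the two conditions required in `IsWeakDeriv`,
bundled so that stability of the class under differentiation can be proved by iteration. -/
def IsTestFunction (φ : EuclideanSpace ℝ (Fin n) → ℝ) : Prop :=
  ContDiff ℝ (⊤ : ℕ∞) φ ∧ HasCompactSupport φ

lemma IsTestFunction.pderiv1 {φ : EuclideanSpace ℝ (Fin n) → ℝ} (hφ : IsTestFunction φ)
    (i : Fin n) : IsTestFunction (pderiv1 i φ) :=
  ⟨(hφ.1.fderiv_right (by simp)).clm_apply contDiff_const, hφ.2.fderiv_apply ℝ _⟩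

lemma IsTestFunction.mderiv {φ : EuclideanSpace ℝ (Fin n) → ℝ} (hφ : IsTestFunction φ)
    (α : Fin n → ℕ) : IsTestFunction (mderiv α φ) :=
  List.foldrRecOn _ _ hφ fun _ hψ i _ =>
    Function.Iterate.rec IsTestFunction hψ (fun _ hχ => hχ.pderiv1 i) (α i)

lemma IsTestFunction.comp_smul {φ : EuclideanSpace ℝ (Fin n) → ℝ} (hφ : IsTestFunction φ)
    {r : ℝ} (hr : r ≠ 0) : IsTestFunction fun x => φ (r • x) :=
  ⟨hφ.1.comp (contDiff_const_smul r), hφ.2.comp_smul hr⟩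

lemma IsWeakDeriv.const_mul {α : Fin n → ℕ} {f g : EuclideanSpace ℝ (Fin n) → ℝ}
    (hfg : IsWeakDeriv α f g) (c : ℝ) :
    IsWeakDeriv α (fun x => c * f x) fun x => c * g x := by
  intro φ hφ hφc
  simp only [mul_assoc, integral_const_mul, hfg φ hφ hφc]
  ring

lemma IsWeakDeriv.comp_smul {α : Fin n → ℕ} {f g : EuclideanSpace ℝ (Fin n) → ℝ}
    (hfg : IsWeakDeriv α f g) {r : ℝ} (hr : r ≠ 0) :
    IsWeakDeriv α (fun x => f (r • x)) fun x => r ^ (∑ i, α i) * g (r • x) := by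
  intro φ hφ hφc
  set s := ∑ i, α i
  set ψ : EuclideanSpace ℝ (Fin n) → ℝ := fun u => φ (r⁻¹ • u)
  have hψ : IsTestFunction ψ := IsTestFunction.comp_smul ⟨hφ, hφc⟩ (inv_ne_zero hr)
  have hφψ : φ = fun x => ψ (r • x) := by simp only [ψ, inv_smul_smul₀ hr]
  have change_variables (F : EuclideanSpace ℝ (Fin n) → ℝ) :
      ∫ x, r ^ s * F (r • x) = r ^ s * (|(r ^ n)⁻¹| * ∫ u, F u) := by
    rw [integral_const_mul, Measure.integral_comp_smul, finrank_euclideanSpace_fin, smul_eq_mul]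
  calc ∫ x, f (r • x) * mderiv α φ x
      = ∫ x, r ^ s * (f (r • x) * mderiv α ψ (r • x)) := by
        simp only [hφψ, mderiv_comp_smul, s, mul_left_comm]
    _ = r ^ s * (|(r ^ n)⁻¹| * ((-1) ^ s * ∫ u, g u * ψ u)) := by
        rw [change_variables fun u => f u * mderiv α ψ u, hfg ψ hψ.1 hψ.2]
    _ = (-1) ^ s * ∫ x, r ^ s * (g (r • x) * ψ (r • x)) := by
        rw [change_variables fun u => g u * ψ u]
        ring
    _ = (-1) ^ s * ∫ x, r ^ s * g (r • x) * φ x := by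
        simp only [hφψ, mul_assoc]

lemma HasSobolevDerivs.integrable {k : ℕ} {f : EuclideanSpace ℝ (Fin n) → ℝ}
    {D : (Fin n → ℕ) → EuclideanSpace ℝ (Fin n) → ℝ} (hf : HasSobolevDerivs k f D) :
    Integrable f :=
  hf.1 ▸ (hf.2 0 (by simp)).1

end MultiIndexDerivative

section DilationHausdorff

variable {Y E : Type*} [MeasurableSpace Y] [NormedAddCommGroup E] [NormedSpace ℝ E]

/-- The Hausdorff operator `x ↦ ∫ w(y) g(a(y) x) dν(y)` of scalar dilations `a` with weight `w` over
a measure space `(Y, ν)`; the operator `hausdorffRad Φ` is the case `a y = ‖y‖⁻¹`, `w = Φ`. -/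
def dilationHausdorff (ν : Measure Y) (a w : Y → ℝ) (g : E → ℝ) : E → ℝ :=
  fun x => ∫ y, w y * g (a y • x) ∂ν

variable [FiniteDimensional ℝ E] [MeasurableSpace E] [BorelSpace E]
  {μ : Measure E} [μ.IsAddHaarMeasure] {ν : Measure Y} {a w : Y → ℝ} {g : E → ℝ}

lemma integrable_prod_mul_comp_smul (ha : Measurable a) (ha0 : ∀ᵐ y ∂ν, a y ≠ 0)
    (hw : Integrable (fun y => |(a y ^ Module.finrank ℝ E)⁻¹| * w y) ν) (hg : Integrable g μ) :
    Integrable (fun p : Y × E => w p.1 * g (a p.1 • p.2)) (ν.prod μ) := by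
  have hw_meas : AEStronglyMeasurable w ν := by
    have hpow : Measurable fun y => |a y ^ Module.finrank ℝ E| := by fun_prop
    refine (hpow.aestronglyMeasurable.mul hw.aestronglyMeasurable).congr ?_
    filter_upwards [ha0] with y hy
    simp only [Pi.mul_apply, abs_inv]
    exact mul_inv_cancel_left₀ (abs_ne_zero.mpr (pow_ne_zero _ hy)) _
  have hsmul : Measure.QuasiMeasurePreserving (fun p : Y × E => a p.1 • p.2) (ν.prod μ) μ :=
    QuasiMeasurePreserving.prod_of_right (by fun_prop) <|
      ha0.mono fun _ hy => Measure.quasiMeasurePreserving_smul μ hy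
  have hmeas : AEStronglyMeasurable (fun p : Y × E => w p.1 * g (a p.1 • p.2)) (ν.prod μ) :=
    hw_meas.comp_fst.mul (hg.aestronglyMeasurable.comp_quasiMeasurePreserving hsmul)
  have hnorm (y : Y) : ∫ x, ‖w y * g (a y • x)‖ ∂μ =
      ‖|(a y ^ Module.finrank ℝ E)⁻¹| * w y‖ * ∫ x, ‖g x‖ ∂μ := by
    simp only [norm_mul, integral_const_mul]
    rw [Measure.integral_comp_smul μ fun x => ‖g x‖, smul_eq_mul,
      Real.norm_of_nonneg (abs_nonneg _)]
    ring
  rw [integrable_prod_iff hmeas]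
  refine ⟨ha0.mono fun y hy => (hg.comp_smul hy).const_mul (w y), ?_⟩
  simp only [hnorm]
  exact hw.norm.mul_const _

lemma integral_dilationHausdorff_mul [SFinite ν] (ha : Measurable a) (ha0 : ∀ᵐ y ∂ν, a y ≠ 0)
    (hw : Integrable (fun y => |(a y ^ Module.finrank ℝ E)⁻¹| * w y) ν) (hg : Integrable g μ)
    {ψ : E → ℝ} (hψ : AEStronglyMeasurable ψ μ) {C : ℝ} (hC : ∀ᵐ x ∂μ, ‖ψ x‖ ≤ C) :
    ∫ x, dilationHausdorff ν a w g x * ψ x ∂μ = ∫ y, w y * ∫ x, g (a y • x) * ψ x ∂μ ∂ν := by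
  have hprod : Integrable (fun p : Y × E => w p.1 * g (a p.1 • p.2) * ψ p.2) (ν.prod μ) :=
    (integrable_prod_mul_comp_smul ha ha0 hw hg).mul_bdd hψ.comp_snd
      (Measure.quasiMeasurePreserving_snd.ae hC)
  calc ∫ x, dilationHausdorff ν a w g x * ψ x ∂μ
      = ∫ x, ∫ y, w y * g (a y • x) * ψ x ∂ν ∂μ := by
        simp only [dilationHausdorff, integral_mul_const]
    _ = ∫ y, ∫ x, w y * g (a y • x) * ψ x ∂μ ∂ν := (integral_integral_swap hprod).symm
    _ = ∫ y, w y * ∫ x, g (a y • x) * ψ x ∂μ ∂ν := by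
        simp only [mul_assoc, integral_const_mul]

theorem isWeakDeriv_dilationHausdorff [SFinite ν] {n : ℕ} {f g : EuclideanSpace ℝ (Fin n) → ℝ}
    {α : Fin n → ℕ} (ha : Measurable a) (ha0 : ∀ᵐ y ∂ν, a y ≠ 0)
    (hw : Integrable (fun y => |(a y ^ n)⁻¹| * w y) ν)
    (hwα : Integrable (fun y => |(a y ^ n)⁻¹| * (a y ^ (∑ i, α i) * w y)) ν)
    (hf : Integrable f) (hg : Integrable g) (hfg : IsWeakDeriv α f g) :
    IsWeakDeriv α (dilationHausdorff ν a w f)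
      (dilationHausdorff ν a (fun y => a y ^ (∑ i, α i) * w y) g) := by
  intro φ hφ hφc
  have hDφ : IsTestFunction (mderiv α φ) := IsTestFunction.mderiv ⟨hφ, hφc⟩ α
  obtain ⟨C, hC⟩ := hφc.exists_bound_of_continuous hφ.continuous
  obtain ⟨C', hC'⟩ := hDφ.2.exists_bound_of_continuous hDφ.1.continuous
  rw [integral_dilationHausdorff_mul ha ha0 (by simpa only [finrank_euclideanSpace_fin] using hw) hf
      hDφ.1.continuous.aestronglyMeasurable (.of_forall hC'),
    integral_dilationHausdorff_mul ha ha0 (by simpa only [finrank_euclideanSpace_fin] using hwα) hg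
      hφ.continuous.aestronglyMeasurable (.of_forall hC),
    ← integral_const_mul]
  refine integral_congr_ae (ha0.mono fun y hy => ?_)
  simp only [hfg.comp_smul hy φ hφ hφc, mul_assoc, integral_const_mul]
  ring

end DilationHausdorff

lemma pow_le_one_add_pow {t : ℝ} (ht : 0 ≤ t) {j k : ℕ} (hjk : j ≤ k) : t ^ j ≤ 1 + t ^ k := by
  rcases le_total t 1 with ht1 | ht1
  · linarith [pow_le_one₀ ht ht1 (n := j), pow_nonneg ht k]
  · linarith [pow_le_pow_right₀ ht1 hjk]

lemma integrable_pow_mul_of_integrable_one_add_pow_mul {Y : Type*} [MeasurableSpace Y]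
    {ν : Measure Y} {t u : Y → ℝ} (ht : Measurable t) (ht0 : ∀ y, 0 ≤ t y) {j k : ℕ} (hjk : j ≤ k)
    (hu : Integrable (fun y => (1 + t y ^ k) * u y) ν) :
    Integrable (fun y => t y ^ j * u y) ν := by
  have hpos (y : Y) : 0 < 1 + t y ^ k := by linarith [pow_nonneg (ht0 y) k]
  have hratio : Measurable fun y => t y ^ j / (1 + t y ^ k) := by fun_prop
  have hratio_le (y : Y) : ‖t y ^ j / (1 + t y ^ k)‖ ≤ 1 := by
    rw [Real.norm_of_nonneg (div_nonneg (pow_nonneg (ht0 y) j) (hpos y).le), div_le_one (hpos y)]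
    exact pow_le_one_add_pow (ht0 y) hjk
  simpa only [← mul_assoc, div_mul_cancel₀ _ (hpos _).ne'] using
    hu.bdd_mul hratio.aestronglyMeasurable (.of_forall hratio_le)

theorem weakDeriv_hausdorffRad_general {n k : ℕ} {Φ : EuclideanSpace ℝ (Fin n) → ℝ}
    (hint : Integrable fun y : EuclideanSpace ℝ (Fin n) => ‖y‖ ^ n * (1 + ‖y‖⁻¹ ^ k) * Φ y)
    {f g : EuclideanSpace ℝ (Fin n) → ℝ} (hf : Integrable f) (hg : Integrable g)
    {α : Fin n → ℕ} (hα : ∑ i, α i ≤ k) (hfg : IsWeakDeriv α f g) :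
    IsWeakDeriv α (hausdorffRad Φ f)
      (fun x => ∫ y, ‖y‖⁻¹ ^ (∑ i, α i) * Φ y * g (‖y‖⁻¹ • x)) := by
  rcases eq_or_ne n 0 with rfl | hn
  -- Lebesgue measure on `ℝ⁰` is an atom at `0`, so `‖y‖⁻¹ ≠ 0` fails, but dilations act trivially.
  · have hsmul (c : ℝ) (x : EuclideanSpace ℝ (Fin 0)) : c • x = x := Subsingleton.elim _ _
    unfold hausdorffRad
    simpa only [hsmul, Finset.univ_eq_empty, Finset.sum_empty, pow_zero, one_mul,
      integral_mul_const] using hfg.const_mul (∫ y, Φ y)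
  have : NeZero n := ⟨hn⟩
  have hinv0 : ∀ᵐ y : EuclideanSpace ℝ (Fin n), ‖y‖⁻¹ ≠ 0 :=
    (Measure.ae_ne volume 0).mono fun y hy => inv_ne_zero (norm_ne_zero_iff.mpr hy)
  have hweight (j : ℕ) (hj : j ≤ k) : Integrable fun y : EuclideanSpace ℝ (Fin n) =>
      |(‖y‖⁻¹ ^ n)⁻¹| * (‖y‖⁻¹ ^ j * Φ y) := by
    have hu : Integrable fun y : EuclideanSpace ℝ (Fin n) =>
        (1 + ‖y‖⁻¹ ^ k) * (‖y‖ ^ n * Φ y) := by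
      simpa only [mul_assoc, mul_left_comm] using hint
    simpa only [inv_pow, inv_inv, abs_pow, abs_norm, mul_left_comm] using
      integrable_pow_mul_of_integrable_one_add_pow_mul (by fun_prop) (by simp) hj hu
  exact isWeakDeriv_dilationHausdorff (by fun_prop) hinv0
    (by simpa only [pow_zero, one_mul] using hweight 0 k.zero_le) (hweight _ hα) hf hg hfg

/-- If `∫ |y|ⁿ (1 + |y|^{-k}) Φ(y) dy < ∞` with `Φ ≥ 0`, then for `f ∈ W^{k,1}`
with weak-derivative family `D` and any multi-index `|α| ≤ k`, the weak derivative of order `α` of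
`H_Φ f` is `x ↦ ∫ |y|^{-|α|} Φ(y) (D^α f)(x/|y|) dy`. -/
theorem weakDeriv_hausdorffRad (n k : ℕ)
    (Φ : EuclideanSpace ℝ (Fin n) → ℝ)
    (hΦ : Measurable Φ) (hΦ0 : ∀ y, 0 ≤ Φ y)
    (hint : Integrable (fun y : EuclideanSpace ℝ (Fin n) =>
      ‖y‖ ^ n * (1 + (‖y‖⁻¹) ^ k) * Φ y))
    (f : EuclideanSpace ℝ (Fin n) → ℝ)
    (D : (Fin n → ℕ) → EuclideanSpace ℝ (Fin n) → ℝ)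
    (hf : HasSobolevDerivs k f D)
    (α : Fin n → ℕ) (hα : ∑ i, α i ≤ k) :
    IsWeakDeriv α (hausdorffRad Φ f)
      (fun x => ∫ y, (‖y‖⁻¹) ^ (∑ i, α i) * Φ y * D α (‖y‖⁻¹ • x)) := by
  obtain ⟨hDα, hfDα⟩ := hf.2 α hα
  exact weakDeriv_hausdorffRad_general hint hf.integrable hDα hα hfDα

end
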